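/- Let (P,≤) be a finite poset with a coloring κ : P → C satisfying: (a) if x is covered by y in P, or if x and y are distinct and incomparable, then κ(x) ≠ κ(y); (b) for each c ∈ C, the set κ⁻¹({c}) is totally ordered. Then for all order filters F, F' of P, one has F ⊆ F' if and only if F ⊴ F'. In particular, (𝓕(P),⊆) and (𝓕(P),⊴) are identical as posets. -/

import Mathlib

/-- `F` is an order filter of the poset `α`: upward closed subset. -/
def IsOrderFilter {α : Type*} [PartialOrder α] (F : Set α) : Prop :=
  ∀ ⦃x y : α⦄, x ∈ F → x ≤ y → y ∈ F

/-- `A_c(F)`: the union of all order filters `F'` with `F' \ F ⊆ κ⁻¹({c})`. -/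
def Aop {α C : Type*} [PartialOrder α] (κ : α → C) (c : C) (F : Set α) : Set α :=
  ⋃₀ {F' : Set α | IsOrderFilter F' ∧ F' \ F ⊆ κ ⁻¹' {c}}

/-- `R_c(F)`: the intersection of all order filters `F'` with `F \ F' ⊆ κ⁻¹({c})`. -/
def Rop {α C : Type*} [PartialOrder α] (κ : α → C) (c : C) (F : Set α) : Set α :=
  ⋂₀ {F' : Set α | IsOrderFilter F' ∧ F \ F' ⊆ κ ⁻¹' {c}}

open Classical in
/-- `S_c(F) := (A_c(F) \ F) ∪ R_c(F)` if this is an order filter, and `F` otherwise. -/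
noncomputable def Sop {α C : Type*} [PartialOrder α] (κ : α → C) (c : C) (F : Set α) : Set α :=
  if IsOrderFilter ((Aop κ c F \ F) ∪ Rop κ c F) then (Aop κ c F \ F) ∪ Rop κ c F else F

/-- One step of the order `⊴`: `F'` is obtained from `F` by applying some `S_c`
with `S_c(F) = F' ⊋ F`. -/
def SStep {α C : Type*} [PartialOrder α] (κ : α → C) (F F' : Set α) : Prop :=
  ∃ c : C, Sop κ c F = F' ∧ F ⊂ F'

/-!
For an order filter `F` and a color `c`, the set `A_c(F) \ R_c(F)` is convex, being a difference
of order filters, and all its elements have color `c`. Condition (a) forces such a set to have at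
most one element. So if some `x ∉ F` lies in `A_c(F)`, then `A_c(F) = F ∪ {x}` and `R_c(F) = F`,
whence `S_c(F) = F ∪ {x}`: the steps of `⊴` are exactly the one-element extensions of order
filters. Between nested order filters one climbs by repeatedly adding a maximal missing element.
-/

/-- No two distinct elements lie in a common monochromatic convex set. This is the form in which
condition (a) is used; the two agree in strongly atomic posets. -/
def IsConvexlyInjective {α C : Type*} [Preorder α] (κ : α → C) : Prop :=
  ∀ ⦃s : Set α⦄ ⦃c : C⦄, s.OrdConnected → s ⊆ κ ⁻¹' {c} → s.Subsingleton

section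

variable {α C : Type*} [PartialOrder α] {κ : α → C} {c : C} {F F' : Set α} {x : α}

theorem isConvexlyInjective_of_covBy_or_incomparable [IsStronglyAtomic α]
    (h : ∀ x y : α, ((x ⋖ y) ∨ (x ≠ y ∧ ¬ x ≤ y ∧ ¬ y ≤ x)) → κ x ≠ κ y) :
    IsConvexlyInjective κ := by
  intro s c hs hsc
  have not_lt {x y : α} (hx : x ∈ s) (hy : y ∈ s) : ¬ x < y := by
    intro hxy
    obtain ⟨z, hxz, hzy⟩ := exists_covBy_le_of_lt hxy
    have hz : z ∈ s := hs.out hx hy ⟨hxz.le, hzy⟩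
    exact h x z (.inl hxz) ((hsc hx).trans (hsc hz).symm)
  intro x hx y hy
  by_contra hne
  refine h x y (.inr ⟨hne, fun hxy => ?_, fun hyx => ?_⟩) ((hsc hx).trans (hsc hy).symm)
  · exact not_lt hx hy (hxy.lt_of_ne hne)
  · exact not_lt hy hx (hyx.lt_of_ne' hne)

theorem isOrderFilter_iff_isUpperSet : IsOrderFilter F ↔ IsUpperSet F :=
  ⟨fun h _ _ hxy hx => h hx hxy, fun h _ _ hx hxy => h hxy hx⟩

theorem isUpperSet_Aop : IsUpperSet (Aop κ c F) :=
  isUpperSet_sUnion fun _ hG => isOrderFilter_iff_isUpperSet.1 hG.1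

theorem isUpperSet_Rop : IsUpperSet (Rop κ c F) :=
  isUpperSet_sInter fun _ hG => isOrderFilter_iff_isUpperSet.1 hG.1

theorem IsOrderFilter.subset_Aop_of_diff_subset (hF' : IsOrderFilter F')
    (h : F' \ F ⊆ κ ⁻¹' {c}) : F' ⊆ Aop κ c F :=
  Set.subset_sUnion_of_mem ⟨hF', h⟩

theorem IsOrderFilter.subset_Aop (hF : IsOrderFilter F) : F ⊆ Aop κ c F :=
  hF.subset_Aop_of_diff_subset (by simp)

theorem IsOrderFilter.Rop_subset (hF : IsOrderFilter F) : Rop κ c F ⊆ F :=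
  Set.sInter_subset_of_mem ⟨hF, by simp⟩

theorem IsOrderFilter.Sop_subset_Aop (hF : IsOrderFilter F) : Sop κ c F ⊆ Aop κ c F := by
  unfold Sop
  split_ifs
  · exact Set.union_subset Set.sdiff_subset (hF.Rop_subset.trans hF.subset_Aop)
  · exact hF.subset_Aop

theorem Aop_diff_Rop_subset_preimage : Aop κ c F \ Rop κ c F ⊆ κ ⁻¹' {c} := by
  rintro x ⟨⟨G, ⟨-, hG⟩, hxG⟩, hxR⟩
  by_cases hxF : x ∈ F
  · obtain ⟨G', ⟨-, hG'⟩, hxG'⟩ : ∃ G', (IsOrderFilter G' ∧ F \ G' ⊆ κ ⁻¹' {c}) ∧ x ∉ G' := by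
      simpa only [Rop, Set.mem_sInter, Set.mem_ofPred_eq, not_forall, exists_prop] using hxR
    exact hG' ⟨hxF, hxG'⟩
  · exact hG ⟨hxG, hxF⟩

namespace IsConvexlyInjective

theorem Aop_diff_Rop_subsingleton (hκ : IsConvexlyInjective κ) :
    (Aop κ c F \ Rop κ c F).Subsingleton :=
  hκ (isUpperSet_Aop.ordConnected.inter isUpperSet_Rop.compl.ordConnected)
    Aop_diff_Rop_subset_preimage

theorem Aop_eq_insert (hκ : IsConvexlyInjective κ) (hF : IsOrderFilter F)
    (hx : x ∈ Aop κ c F \ F) : Aop κ c F = insert x F := by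
  have hAF : Aop κ c F \ F = {x} :=
    (hκ.Aop_diff_Rop_subsingleton.anti
      (Set.sdiff_subset_sdiff_right hF.Rop_subset)).eq_singleton_of_mem hx
  rw [← Set.sdiff_union_of_subset hF.subset_Aop, hAF, Set.singleton_union]

theorem Rop_eq_self (hκ : IsConvexlyInjective κ) (hF : IsOrderFilter F)
    (hx : x ∈ Aop κ c F \ F) : Rop κ c F = F := by
  refine hF.Rop_subset.antisymm fun y hy => ?_
  by_contra hyR
  have hyx : y = x := hκ.Aop_diff_Rop_subsingleton ⟨hF.subset_Aop hy, hyR⟩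
    ⟨hx.1, fun hxR => hx.2 (hF.Rop_subset hxR)⟩
  exact hx.2 (hyx ▸ hy)

theorem Sop_eq_insert (hκ : IsConvexlyInjective κ) (hF : IsOrderFilter F)
    (hx : x ∈ Aop κ c F \ F) : Sop κ c F = insert x F := by
  have hA : Aop κ c F \ F ∪ Rop κ c F = Aop κ c F := by
    rw [hκ.Rop_eq_self hF hx, Set.sdiff_union_of_subset hF.subset_Aop]
  rw [Sop, hA, if_pos (isOrderFilter_iff_isUpperSet.2 isUpperSet_Aop), hκ.Aop_eq_insert hF hx]

theorem SStep_iff_exists_insert (hκ : IsConvexlyInjective κ) (hF : IsOrderFilter F) :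
    SStep κ F F' ↔ IsOrderFilter F' ∧ ∃ x ∉ F, insert x F = F' := by
  constructor
  · rintro ⟨c, rfl, hFS⟩
    obtain ⟨x, hxS, hxF⟩ := Set.exists_of_ssubset hFS
    have hx : x ∈ Aop κ c F \ F := ⟨hF.Sop_subset_Aop hxS, hxF⟩
    have hS : Sop κ c F = insert x F := hκ.Sop_eq_insert hF hx
    refine ⟨?_, x, hxF, hS.symm⟩
    rw [hS, ← hκ.Aop_eq_insert hF hx]
    exact isOrderFilter_iff_isUpperSet.2 isUpperSet_Aop
  · rintro ⟨hF', x, hxF, rfl⟩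
    have hdiff : insert x F \ F ⊆ κ ⁻¹' {κ x} :=
      fun y hy => congrArg κ (hy.1.resolve_right hy.2)
    have hx : x ∈ Aop κ (κ x) F := hF'.subset_Aop_of_diff_subset hdiff (Set.mem_insert x F)
    exact ⟨κ x, hκ.Sop_eq_insert hF ⟨hx, hxF⟩, Set.ssubset_insert hxF⟩

end IsConvexlyInjective

theorem IsOrderFilter.exists_insert (hF : IsOrderFilter F) (hF' : IsOrderFilter F')
    (hfin : (F' \ F).Finite) (hne : (F' \ F).Nonempty) :
    ∃ x ∈ F' \ F, IsOrderFilter (insert x F) := by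
  obtain ⟨x, hx⟩ := hfin.exists_maximal hne
  refine ⟨x, hx.prop, ?_⟩
  rintro y z (rfl | hy) hyz
  · by_cases hz : z ∈ F
    · exact .inr hz
    · exact .inl (hx.eq_of_ge ⟨hF' hx.prop.1 hyz, hz⟩ hyz)
  · exact .inr (hF hy hyz)

theorem IsConvexlyInjective.reflTransGen_SStep_of_subset (hκ : IsConvexlyInjective κ)
    (hF : IsOrderFilter F) (hF' : IsOrderFilter F') (hfin : (F' \ F).Finite) (h : F ⊆ F') :
    Relation.ReflTransGen (SStep κ) F F' := by
  induction hn : (F' \ F).ncard using Nat.strong_induction_on generalizing F with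
  | _ n ih =>
    rcases h.eq_or_ssubset with rfl | hss
    · exact .refl
    · obtain ⟨x, hx, hins⟩ := hF.exists_insert hF' hfin (Set.nonempty_of_ssubset hss)
      have hdiff : F' \ insert x F = (F' \ F) \ {x} := by
        rw [Set.sdiff_sdiff, Set.union_singleton]
      have hcard : (F' \ insert x F).ncard < n := by
        rw [hdiff, ← hn]
        exact Set.ncard_sdiff_singleton_lt_of_mem hx hfin
      refine .head ((hκ.SStep_iff_exists_insert hF).2 ⟨hins, x, hx.2, rfl⟩) ?_
      exact ih _ hcard hins (hdiff ▸ hfin.sdiff) (Set.insert_subset hx.1 h) rfl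

theorem IsConvexlyInjective.subset_and_finite_diff_of_reflTransGen (hκ : IsConvexlyInjective κ)
    (hF : IsOrderFilter F) (h : Relation.ReflTransGen (SStep κ) F F') :
    F ⊆ F' ∧ (F' \ F).Finite := by
  induction h using Relation.ReflTransGen.head_induction_on with
  | refl => exact ⟨subset_rfl, by simp⟩
  | head hstep _ ih =>
    obtain ⟨hG, x, -, rfl⟩ := (hκ.SStep_iff_exists_insert hF).1 hstep
    obtain ⟨hsub, hfin⟩ := ih hG
    refine ⟨(Set.subset_insert x _).trans hsub, (hfin.insert x).subset ?_⟩
    rintro y ⟨hy, hyF⟩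
    by_cases hyx : y = x
    · exact .inl hyx
    · exact .inr ⟨hy, fun hyG => hyG.elim hyx hyF⟩

theorem subset_iff_SStep_reflTransGen_general (hκ : IsConvexlyInjective κ)
    (hF : IsOrderFilter F) (hF' : IsOrderFilter F') :
    (F ⊆ F' ∧ (F' \ F).Finite) ↔ Relation.ReflTransGen (SStep κ) F F' :=
  ⟨fun ⟨h, hfin⟩ => hκ.reflTransGen_SStep_of_subset hF hF' hfin h,
    hκ.subset_and_finite_diff_of_reflTransGen hF⟩

end

/-- In a finite colored poset where (a) elements in a covering relation, or distinct
incomparable elements, have distinct colors, and (b) each color class is totally ordered,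
for order filters `F, F'` one has `F ⊆ F'` iff `F ⊴ F'`, where `⊴` is the reflexive
transitive closure of the relation `SStep`. -/
theorem subset_iff_SStep_reflTransGen {α C : Type*} [PartialOrder α] [Fintype α] (κ : α → C)
    (ha : ∀ x y : α, ((x ⋖ y) ∨ (x ≠ y ∧ ¬ x ≤ y ∧ ¬ y ≤ x)) → κ x ≠ κ y)
    (hb : ∀ c : C, ∀ x ∈ κ ⁻¹' {c}, ∀ y ∈ κ ⁻¹' {c}, x ≤ y ∨ y ≤ x)
    (F F' : Set α) (hF : IsOrderFilter F) (hF' : IsOrderFilter F') :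
    F ⊆ F' ↔ Relation.ReflTransGen (SStep κ) F F' := by
  have hκ : IsConvexlyInjective κ := isConvexlyInjective_of_covBy_or_incomparable ha
  rw [← subset_iff_SStep_reflTransGen_general hκ hF hF', and_iff_left (F' \ F).toFinite]
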